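/- arXiv:1905.02288 — 2 statements merged into one kernel-verified Lean document; each statement's English description precedes it below -/
import Mathlib

section
/- Let f, g ∈ ℂ[X,Y] be quasi-convenient polynomials of positive degree. Then ν∞(f,g) = Area(Δ∞(fg)) − Area(Δ∞(f)) − Area(Δ∞(g)) = 0 if and only if both Δ∞(f) and Δ∞(g) are segments contained in one and the same straight line through the origin. -/
open MvPolynomial MeasureTheory Pointwise

noncomputable section

/-- Polynomials in two complex variables. -/
abbrev P2 := MvPolynomial (Fin 2) ℂ

/-- The `w`-weight of a monomial exponent. -/
def wt (w : ℝ × ℝ) (m : Fin 2 →₀ ℕ) : ℝ := w.1 * (m 0 : ℝ) + w.2 * (m 1 : ℝ)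

/-- `d_w(f)`: maximal `w`-weight of a monomial of `f`. -/
def dw (w : ℝ × ℝ) (f : P2) : ℝ := sSup (wt w '' (f.support : Set (Fin 2 →₀ ℕ)))

open Classical in
/-- The initial form `init(f, w)`: sum of the monomials of `f` of maximal `w`-weight. -/
def initForm (w : ℝ × ℝ) (f : P2) : P2 :=
  ∑ m ∈ f.support, if wt w m = dw w f then monomial m (f.coeff m) else 0

/-- `f` is quasi-convenient: some pure power of `X` and some pure power of `Y`
occur in `f` with nonzero coefficient. -/
def QuasiConvenient (f : P2) : Prop :=
  (∃ a : ℕ, f.coeff (Finsupp.single 0 a) ≠ 0) ∧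
  (∃ b : ℕ, f.coeff (Finsupp.single 1 b) ≠ 0)

/-- The Newton diagram at infinity `Δ∞(f)`. -/
def newton (f : P2) : Set (ℝ × ℝ) :=
  convexHull ℝ ({(0, 0)} ∪ {p : ℝ × ℝ | ∃ m ∈ f.support, p = ((m 0 : ℝ), (m 1 : ℝ))})

/-- Area (2-dimensional Lebesgue measure) of a plane set. -/
def area (S : Set (ℝ × ℝ)) : ℝ := (volume S).toReal

/-- `ν∞(f, g)`. -/
def nuInf (f g : P2) : ℝ := area (newton (f * g)) - area (newton f) - area (newton g)

/-- `f` is nondegenerate at infinity. -/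
def NondegAtInf (f : P2) : Prop :=
  ∀ w : ℝ × ℝ, (0 < w.1 ∨ 0 < w.2) →
    ¬ ∃ x y : ℂ, x ≠ 0 ∧ y ≠ 0 ∧
      eval ![x, y] (initForm w f) = 0 ∧
      eval ![x, y] (pderiv 0 (initForm w f)) = 0 ∧
      eval ![x, y] (pderiv 1 (initForm w f)) = 0

/-- The pair `(f, g)` is nondegenerate at infinity. -/
def PairNondegAtInf (f g : P2) : Prop :=
  ∀ w : ℝ × ℝ, (0 < w.1 ∨ 0 < w.2) →
    ¬ ∃ x y : ℂ, x ≠ 0 ∧ y ≠ 0 ∧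
      eval ![x, y] (initForm w f) = 0 ∧ eval ![x, y] (initForm w g) = 0

/-- `g` and `h` have no common nonunit factor. -/
def CoprimeDiv (g h : P2) : Prop := ∀ d : P2, d ∣ g → d ∣ h → IsUnit d

/-- `f` is nearly irreducible: positive degree, and any two nonconstant factors
have a common zero in `ℂ²`. -/
def NearlyIrreducible (f : P2) : Prop :=
  0 < f.totalDegree ∧
  ∀ g h : P2, g ∣ f → h ∣ f → 0 < g.totalDegree → 0 < h.totalDegree →
    ∃ x y : ℂ, eval ![x, y] g = 0 ∧ eval ![x, y] h = 0

/-- The maximal ideal of polynomials vanishing at a point `P ∈ ℂ²`. -/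
def mIdeal (Pt : ℂ × ℂ) : Ideal P2 := RingHom.ker (eval ![Pt.1, Pt.2] : P2 →+* ℂ)

instance (Pt : ℂ × ℂ) : (mIdeal Pt).IsPrime := RingHom.ker_isPrime _

/-- Intersection multiplicity `(f, g)_P`: the `ℂ`-dimension of the quotient of the
local ring of `ℂ²` at `P` by the ideal generated by `f` and `g`. -/
def interMult (f g : P2) (Pt : ℂ × ℂ) : ℕ :=
  Module.finrank ℂ
    (Localization.AtPrime (mIdeal Pt) ⧸
      Ideal.span {algebraMap P2 (Localization.AtPrime (mIdeal Pt)) f,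
                  algebraMap P2 (Localization.AtPrime (mIdeal Pt)) g})

/-- Exponent embedding. -/
def EE (m : Fin 2 →₀ ℕ) : ℝ × ℝ := ((m 0 : ℝ), (m 1 : ℝ))

/-- The generating set of the Newton diagram. -/
def gens (f : P2) : Set (ℝ × ℝ) :=
  {(0, 0)} ∪ {p : ℝ × ℝ | ∃ m ∈ f.support, p = ((m 0 : ℝ), (m 1 : ℝ))}

lemma EE_add (m n : Fin 2 →₀ ℕ) : EE (m + n) = EE m + EE n := by
  simp [EE]

lemma EE_inj {m n : Fin 2 →₀ ℕ} (h : EE m = EE n) : m = n := by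
  simp only [EE, Prod.mk.injEq, Nat.cast_inj] at h
  ext i
  fin_cases i
  · exact h.1
  · exact h.2

lemma gens_finite (f : P2) : (gens f).Finite := by
  apply Set.Finite.union (Set.finite_singleton _)
  apply (f.support.finite_toSet.image EE).subset
  rintro p ⟨m, hm, rfl⟩
  exact ⟨m, hm, rfl⟩

lemma newton_eq (f : P2) : newton f = convexHull ℝ (gens f) := rfl

lemma mem_gens {f : P2} {m : Fin 2 →₀ ℕ} (h : f.coeff m ≠ 0) : EE m ∈ gens f :=
  Or.inr ⟨m, mem_support_iff.2 h, rfl⟩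

lemma gens_sub (f : P2) : gens f ⊆ newton f := subset_convexHull ℝ _

lemma mem_newton {f : P2} {m : Fin 2 →₀ ℕ} (h : f.coeff m ≠ 0) : EE m ∈ newton f :=
  gens_sub f (mem_gens h)

lemma zero_gens (f : P2) : (0 : ℝ × ℝ) ∈ gens f := Or.inl rfl

lemma zero_newton (f : P2) : (0 : ℝ × ℝ) ∈ newton f := gens_sub f (zero_gens f)

lemma newton_convex (f : P2) : Convex ℝ (newton f) := convex_convexHull ℝ _

lemma newton_compact (f : P2) : IsCompact (newton f) := (gens_finite f).isCompact_convexHull (𝕜 := ℝ)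

lemma newton_quad (f : P2) {p : ℝ × ℝ} (hp : p ∈ newton f) : 0 ≤ p.1 ∧ 0 ≤ p.2 := by
  have hc : Convex ℝ (Set.Ici (0 : ℝ × ℝ)) := convex_Ici 0
  have : newton f ⊆ Set.Ici (0 : ℝ × ℝ) := by
    apply convexHull_min _ hc
    rintro q (rfl | ⟨m, hm, rfl⟩)
    · exact Set.mem_Ici.2 (le_refl (0 : ℝ × ℝ))
    · exact ⟨Nat.cast_nonneg _, Nat.cast_nonneg _⟩
  exact this hp

lemma newton_mul_sub (f g : P2) : newton (f * g) ⊆ newton f + newton g := by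
  apply convexHull_min _ ((newton_convex f).add (newton_convex g))
  rintro q (rfl | ⟨m, hm, rfl⟩)
  · exact ⟨0, zero_newton f, 0, zero_newton g, add_zero (0 : ℝ × ℝ)⟩
  · classical
    obtain ⟨a, ha, b, hb, rfl⟩ := Finset.mem_add.1 (MvPolynomial.support_mul f g hm)
    exact ⟨EE a, mem_newton (mem_support_iff.1 ha), EE b, mem_newton (mem_support_iff.1 hb),
      (EE_add a b).symm⟩

/-- If `g` is quasi-convenient without constant term, small multiples of any
quadrant vector lie in its diagram. -/
lemma newton_smallmul (g : P2) (hg : QuasiConvenient g) (h0 : g.coeff 0 = 0)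
    {x y : ℝ} (hx : 0 ≤ x) (hy : 0 ≤ y) : ∃ ε : ℝ, 0 < ε ∧ ε • (x, y) ∈ newton g := by
  obtain ⟨⟨c, hc⟩, ⟨d, hd⟩⟩ := hg
  have hc0 : c ≠ 0 := by rintro rfl; simp [h0] at hc
  have hd0 : d ≠ 0 := by rintro rfl; simp [h0] at hd
  have h1 := mem_newton hc
  have h2 := mem_newton hd
  have hcp : (0 : ℝ) < c := by positivity
  have hdp : (0 : ℝ) < d := by positivity
  have e1 : EE (Finsupp.single 0 c) = ((c : ℝ), 0) := by simp [EE]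
  have e2 : EE (Finsupp.single 1 d) = (0, (d : ℝ)) := by simp [EE]
  rw [e1] at h1
  rw [e2] at h2
  set k := x / c + y / d with hk
  have hk0 : 0 ≤ k := by positivity
  refine ⟨1 / (1 + k), by positivity, ?_⟩
  have hconv := newton_convex g
  have key := hconv.sum_mem (t := (Finset.univ : Finset (Fin 3)))
    (w := ![1 / (1 + k), (x / c) / (1 + k), (y / d) / (1 + k)])
    (z := ![0, ((c : ℝ), 0), (0, (d : ℝ))]) ?_ ?_ ?_
  · convert key using 1
    simp [Fin.sum_univ_three]
    constructor <;> field_simp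
  · intro i _
    fin_cases i <;> simp <;> positivity
  · simp [Fin.sum_univ_three]
    field_simp
    rw [hk]; field_simp; ring
  · intro i _
    fin_cases i
    · exact zero_newton g
    · exact h1
    · exact h2

lemma ext_zero (f g : P2) (hg : QuasiConvenient g) (h0 : g.coeff 0 = 0) {v : ℝ × ℝ}
    (hvf : v ∈ newton f) (hv : v ∈ Set.extremePoints ℝ (newton f + newton g)) : v = 0 := by
  obtain ⟨hx, hy⟩ := newton_quad f hvf
  obtain ⟨ε, hε, hm⟩ := newton_smallmul g hg h0 hx hy
  have hA : v + ε • v ∈ newton f + newton g := ⟨v, hvf, ε • v, hm, rfl⟩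
  have hB : (0 : ℝ × ℝ) ∈ newton f + newton g :=
    ⟨0, zero_newton f, 0, zero_newton g, by simp⟩
  refine (hv.2 hB hA ?_).symm
  refine ⟨ε / (1 + ε), 1 / (1 + ε), by positivity, by positivity, by field_simp; ring, ?_⟩
  ext <;> simp <;> field_simp

lemma ext_mem (f g : P2) (hf : QuasiConvenient f) (hg : QuasiConvenient g) {v : ℝ × ℝ}
    (hv : v ∈ Set.extremePoints ℝ (newton f + newton g)) : v ∈ gens (f * g) := by
  have hv' : v ∈ gens f + gens g := by
    apply extremePoints_convexHull_subset (𝕜 := ℝ)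
    rwa [convexHull_add]
  -- pair of exponents case
  have main : ∀ m n, f.coeff m ≠ 0 → g.coeff n ≠ 0 → v = EE m + EE n → v ∈ gens (f * g) := by
    intro m n hm hn hvmn
    have hcoef : (f * g).coeff (m + n) = f.coeff m * g.coeff n := by
      classical
      rw [MvPolynomial.coeff_mul]
      rw [Finset.sum_eq_single (m, n)]
      · rintro ⟨m', n'⟩ hmem hne
        by_contra hprod
        have hm' := left_ne_zero_of_mul hprod
        have hn' := right_ne_zero_of_mul hprod
        replace hmem : m' + n' = m + n := Finset.HasAntidiagonal.mem_antidiagonal.1 hmem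
        have hsum : EE m' + EE n' = EE m + EE n := by rw [← EE_add, ← EE_add, hmem]
        have h1 : EE m + EE n' ∈ newton f + newton g :=
          ⟨_, mem_newton hm, _, mem_newton hn', rfl⟩
        have h2 : EE m' + EE n ∈ newton f + newton g :=
          ⟨_, mem_newton hm', _, mem_newton hn, rfl⟩
        have h3 := hv.2 h1 h2 ⟨1 / 2, 1 / 2, by norm_num, by norm_num, by norm_num, by
          have : EE m + EE n' + (EE m' + EE n) = (2 : ℝ) • v := by
            rw [hvmn, two_smul]
            calc EE m + EE n' + (EE m' + EE n) = EE m + EE n + (EE m' + EE n') := by abel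
              _ = _ := by rw [hsum]
          rw [← smul_add, this, smul_smul]; norm_num⟩
        rw [hvmn] at h3
        have h4 : n' = n := EE_inj (add_left_cancel h3)
        subst h4
        have h5 : m' = m := add_right_cancel hmem
        subst h5
        exact hne rfl
      · intro h
        exact absurd (by simp) h
    rw [hvmn, ← EE_add]
    apply mem_gens
    rw [hcoef]
    exact mul_ne_zero hm hn
  have E0 : EE 0 = 0 := by simp [EE]
  obtain ⟨p, hp, q, hq, hpq⟩ := hv'
  simp only at hpq
  have hp' : p = 0 ∨ ∃ m, f.coeff m ≠ 0 ∧ p = EE m := by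
    rcases hp with hp | ⟨m, hm, rfl⟩
    · exact Or.inl hp
    · exact Or.inr ⟨m, mem_support_iff.1 hm, rfl⟩
  have hq' : q = 0 ∨ ∃ m, g.coeff m ≠ 0 ∧ q = EE m := by
    rcases hq with hp | ⟨m, hm, rfl⟩
    · exact Or.inl hp
    · exact Or.inr ⟨m, mem_support_iff.1 hm, rfl⟩
  rcases hp' with rfl | ⟨m, hm, rfl⟩
  · rcases hq' with rfl | ⟨n, hn, rfl⟩
    · rw [← hpq, add_zero]; exact zero_gens _
    · by_cases h0 : f.coeff 0 = 0
      · have : v = 0 := by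
          rw [add_comm] at hv
          exact ext_zero g f hf h0 (by rw [← hpq, zero_add]; exact mem_newton hn) hv
        rw [this]; exact zero_gens _
      · exact main 0 n h0 hn (by rw [E0, hpq])
  · rcases hq' with rfl | ⟨n, hn, rfl⟩
    · by_cases h0 : g.coeff 0 = 0
      · have : v = 0 :=
          ext_zero f g hg h0 (by rw [← hpq, add_zero]; exact mem_newton hm) hv
        rw [this]; exact zero_gens _
      · exact main m 0 hm h0 (by rw [E0, hpq])
    · exact main m n hm hn hpq.symm

lemma newton_mul_sup (f g : P2) (hf : QuasiConvenient f) (hg : QuasiConvenient g) :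
    newton f + newton g ⊆ newton (f * g) := by
  have hc := (newton_compact f).add (newton_compact g)
  rw [← closure_convexHull_extremePoints hc ((newton_convex f).add (newton_convex g))]
  apply closure_minimal _ (newton_compact (f * g)).isClosed
  exact convexHull_mono fun v hv => ext_mem f g hf hg hv

lemma newton_nonzero (f : P2) (hd : 0 < f.totalDegree) : ∃ p ∈ newton f, p ≠ 0 := by
  by_contra! h
  have : ∀ m ∈ f.support, m = 0 := by
    intro m hm
    apply EE_inj
    rw [h _ (mem_newton (mem_support_iff.1 hm))]
    simp [EE, Prod.zero_eq_mk]
  have h2 : f.totalDegree ≤ 0 := by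
    refine Finset.sup_le ?_
    intro m hm
    simp [this m hm]
  omega

lemma lexmax {K : Set (ℝ × ℝ)} (hK : IsCompact K) (hn : K.Nonempty) :
    ∃ e ∈ K, ∀ p ∈ K, p.1 < e.1 ∨ (p.1 = e.1 ∧ p.2 ≤ e.2) := by
  obtain ⟨e, he, hemax⟩ := hK.exists_isMaxOn hn continuous_fst.continuousOn
  have hK2 : IsCompact (K ∩ Prod.fst ⁻¹' {e.1}) :=
    hK.inter_right (isClosed_singleton.preimage continuous_fst)
  obtain ⟨d, hd, hdmax⟩ := hK2.exists_isMaxOn ⟨e, he, rfl⟩ continuous_snd.continuousOn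
  have hd1 : d.1 = e.1 := hd.2
  refine ⟨d, hd.1, fun p hp => ?_⟩
  have h1 : p.1 ≤ e.1 := hemax hp
  rcases h1.lt_or_eq with h | h
  · left; rw [hd1]; exact h
  · right
    exact ⟨by rw [hd1, h], hdmax ⟨hp, h⟩⟩

/-- The strict superadditivity of area. -/
lemma strict {A B : Set (ℝ × ℝ)} (hA : IsCompact A) (hB : IsCompact B) (cA : Convex ℝ A)
    (cB : Convex ℝ B) (zA : (0 : ℝ × ℝ) ∈ A) (zB : (0 : ℝ × ℝ) ∈ B)
    (qB : ∀ p ∈ B, 0 ≤ p.1 ∧ 0 ≤ p.2)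
    {e : ℝ × ℝ} (he : e ∈ A) (e0 : e ≠ 0)
    (hmax : ∀ p ∈ A, p.1 < e.1 ∨ (p.1 = e.1 ∧ p.2 ≤ e.2))
    (hq : ∀ p ∈ A, 0 ≤ p.1 ∧ 0 ≤ p.2)
    {a b : ℝ × ℝ} (ha : a ∈ A) (hb : b ∈ B) (hab : a.1 * b.2 - a.2 * b.1 ≠ 0) :
    volume A + volume B < volume (A + B) := by
  have hS : IsCompact (A + B) := hA.add hB
  have cS : Convex ℝ (A + B) := cA.add cB
  have sA : A ⊆ A + B := fun p hp => ⟨p, hp, 0, zB, by simp⟩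
  have sB : e +ᵥ B ⊆ A + B := by
    rintro _ ⟨p, hp, rfl⟩
    exact ⟨e, he, p, hp, rfl⟩
  have hB' : IsCompact (e +ᵥ B) := hB.vadd e
  have hinter : A ∩ (e +ᵥ B) ⊆ {e} := by
    rintro _ ⟨h1, p, hp, rfl⟩
    have h2 := hmax _ h1
    have h3 := qB p hp
    simp only [vadd_eq_add, Prod.fst_add, Prod.snd_add] at h2
    have hp0 : p = 0 := by
      rcases h2 with h2 | ⟨h2, h4⟩
      · linarith [h3.1]
      · ext <;> simp <;> linarith [h3.1, h3.2]
    simp [hp0]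
  -- a segment avoiding `e`
  have hseg : ∃ p ∈ A, ∃ q ∈ B, e ∉ segment ℝ p (e + q) := by
    have hb0 : b ≠ 0 := by rintro rfl; simp at hab
    by_cases hcase : e.1 * b.2 - e.2 * b.1 = 0
    · refine ⟨a, ha, b, hb, ?_⟩
      rintro ⟨s, t, hs, ht, hst, heq⟩
      have h1 := congrArg Prod.fst heq
      have h2 := congrArg Prod.snd heq
      simp at h1 h2
      have h3 : s * (a.1 * b.2 - a.2 * b.1) = 0 := by
        have : t = 1 - s := by linarith
        subst this
        linear_combination b.2 * h1 - b.1 * h2 - (1 - s) * hcase + hcase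
      have hs0 : s = 0 := by
        rcases mul_eq_zero.1 h3 with h | h
        · exact h
        · exact absurd h hab
      have ht1 : t = 1 := by linarith
      subst hs0 ht1
      apply hb0
      ext <;> simp <;> linarith
    · refine ⟨0, zA, b, hb, ?_⟩
      rintro ⟨s, t, hs, ht, hst, heq⟩
      have h1 := congrArg Prod.fst heq
      have h2 := congrArg Prod.snd heq
      simp at h1 h2
      have h3 : t * (e.1 * b.2 - e.2 * b.1) = 0 := by
        linear_combination e.1 * h2 - e.2 * h1
      have ht0 : t = 0 := by
        rcases mul_eq_zero.1 h3 with h | h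
        · exact h
        · exact absurd h hcase
      subst ht0
      apply e0
      ext <;> simp <;> linarith
  obtain ⟨p, hp, q, hq', hne⟩ := hseg
  have hpS : p ∈ A + B := sA hp
  have hqS : e + q ∈ A + B := ⟨e, he, q, hq', rfl⟩
  have hr : ∃ r ∈ A + B, r ∉ A ∪ (e +ᵥ B) := by
    by_contra! hcov
    have hpre : IsPreconnected (segment ℝ p (e + q)) := (convex_segment _ _).isPreconnected
    rw [isPreconnected_closed_iff] at hpre
    obtain ⟨z, hz, hz2⟩ := hpre A (e +ᵥ B) hA.isClosed hB'.isClosed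
      (fun x hx => hcov x (cS.segment_subset hpS hqS hx))
      ⟨p, left_mem_segment ℝ _ _, hp⟩ ⟨e + q, right_mem_segment ℝ _ _, q, hq', rfl⟩
    have : z = e := hinter hz2
    exact hne (this ▸ hz)
  obtain ⟨r, hrS, hrK⟩ := hr
  -- nonempty interior
  have hint : (interior (A + B)).Nonempty := by
    set D := a.1 * b.2 - a.2 * b.1 with hD
    let U : Set (ℝ × ℝ) := {x | 0 < (x.1 * b.2 - x.2 * b.1) / D} ∩
      {x | (x.1 * b.2 - x.2 * b.1) / D < 1} ∩ {x | 0 < (a.1 * x.2 - a.2 * x.1) / D} ∩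
      {x | (a.1 * x.2 - a.2 * x.1) / D < 1}
    have hU : IsOpen U := by
      refine ((IsOpen.inter ?_ ?_).inter ?_).inter ?_
      · exact isOpen_lt (by fun_prop) (by fun_prop)
      · exact isOpen_lt (by fun_prop) (by fun_prop)
      · exact isOpen_lt (by fun_prop) (by fun_prop)
      · exact isOpen_lt (by fun_prop) (by fun_prop)
    have hUS : U ⊆ A + B := by
      rintro x ⟨⟨⟨h1, h2⟩, h3⟩, h4⟩
      simp only [Set.mem_ofPred_eq] at h1 h2 h3 h4
      refine ⟨((x.1 * b.2 - x.2 * b.1) / D) • a, cA.smul_mem_of_zero_mem zA ha ⟨h1.le, h2.le⟩,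
        ((a.1 * x.2 - a.2 * x.1) / D) • b, cB.smul_mem_of_zero_mem zB hb ⟨h3.le, h4.le⟩, ?_⟩
      ext
      · simp
        field_simp
        rw [hD]; ring
      · simp
        field_simp
        rw [hD]; ring
    refine ⟨(1 / 2 : ℝ) • a + (1 / 2 : ℝ) • b, interior_maximal hUS hU ?_⟩
    have e1 : (((1 / 2 : ℝ) • a + (1 / 2 : ℝ) • b).1 * b.2
        - ((1 / 2 : ℝ) • a + (1 / 2 : ℝ) • b).2 * b.1) / D = 1 / 2 := by
      rw [div_eq_iff hab]; simp; rw [hD]; ring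
    have e2 : (a.1 * ((1 / 2 : ℝ) • a + (1 / 2 : ℝ) • b).2
        - a.2 * ((1 / 2 : ℝ) • a + (1 / 2 : ℝ) • b).1) / D = 1 / 2 := by
      rw [div_eq_iff hab]; simp; rw [hD]; ring
    refine ⟨⟨⟨?_, ?_⟩, ?_⟩, ?_⟩ <;> simp only [Set.mem_ofPred_eq, e1, e2] <;> norm_num
  have hKc : IsClosed (A ∪ (e +ᵥ B)) := hA.isClosed.union hB'.isClosed
  have hrcl : r ∈ closure (interior (A + B)) := by
    rw [cS.closure_interior_eq_closure_of_nonempty_interior hint]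
    exact subset_closure hrS
  have hne2 : ((A ∪ (e +ᵥ B))ᶜ ∩ interior (A + B)).Nonempty :=
    mem_closure_iff.1 hrcl _ hKc.isOpen_compl hrK
  have hpos : 0 < volume ((A ∪ (e +ᵥ B))ᶜ ∩ interior (A + B)) :=
    (hKc.isOpen_compl.inter isOpen_interior).measure_pos volume hne2
  have hdisj : AEDisjoint volume A (e +ᵥ B) := by
    refine measure_mono_null hinter ?_
    simp
  have hun : volume (A ∪ (e +ᵥ B)) = volume A + volume B := by
    rw [measure_union₀ hB'.measurableSet.nullMeasurableSet hdisj, measure_vadd]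
  have hfin : volume (A ∪ (e +ᵥ B)) ≠ ⊤ := (hA.union hB').measure_lt_top.ne
  rw [← hun]
  calc volume (A ∪ (e +ᵥ B))
      < volume (A ∪ (e +ᵥ B)) + volume ((A ∪ (e +ᵥ B))ᶜ ∩ interior (A + B)) :=
        ENNReal.lt_add_right hfin hpos.ne'
    _ = volume ((A ∪ (e +ᵥ B)) ∪ ((A ∪ (e +ᵥ B))ᶜ ∩ interior (A + B))) := by
        exact (measure_union (Set.disjoint_left.2 fun x hx hx2 => hx2.1 hx)
          (hKc.isOpen_compl.inter isOpen_interior).measurableSet).symm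
    _ ≤ volume (A + B) := measure_mono
        (Set.union_subset (Set.union_subset sA sB)
          (Set.inter_subset_right.trans interior_subset))

lemma span_null (v : ℝ × ℝ) : volume ((Submodule.span ℝ {v} : Submodule ℝ (ℝ × ℝ)) : Set (ℝ × ℝ)) = 0 := by
  apply Measure.addHaar_submodule
  intro h
  have h1 := finrank_span_le_card (R := ℝ) ({v} : Set (ℝ × ℝ))
  rw [h, finrank_top] at h1
  simp at h1

/-- Proportionality to a lexicographic maximum with ratio in the unit interval. -/
lemma ray {K : Set (ℝ × ℝ)} (hK : Convex ℝ K) (z : (0 : ℝ × ℝ) ∈ K)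
    (hq : ∀ p ∈ K, 0 ≤ p.1 ∧ 0 ≤ p.2) {e : ℝ × ℝ} (he : e ∈ K) (e0 : e ≠ 0)
    (hmax : ∀ p ∈ K, p.1 < e.1 ∨ (p.1 = e.1 ∧ p.2 ≤ e.2))
    (hdep : ∀ p ∈ K, e.1 * p.2 - e.2 * p.1 = 0) : K = segment ℝ 0 e := by
  apply Set.Subset.antisymm
  · intro p hp
    have hd := hdep p hp
    have hp0 := hq p hp
    have he0 := hq e he
    rw [segment_eq_image]
    rcases he0.1.lt_or_eq with h1 | h1
    · have hle : p.1 ≤ e.1 := by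
        rcases hmax p hp with h | h
        · exact h.le
        · exact h.1.le
      refine ⟨p.1 / e.1, ⟨by have := hp0.1; positivity, by rw [div_le_one h1]; exact hle⟩, ?_⟩
      ext
      · simp; field_simp
      · simp; field_simp; linarith
    · have h2 : 0 < e.2 := by
        rcases he0.2.lt_or_eq with h | h
        · exact h
        · exact absurd (Prod.ext h1.symm h.symm) e0
      have hp1 : p.1 = 0 := by
        rw [← h1] at hd
        have : e.2 * p.1 = 0 := by linarith
        rcases mul_eq_zero.1 this with h | h
        · linarith
        · exact h
      have hle : p.2 ≤ e.2 := by
        rcases hmax p hp with h | h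
        · rw [← h1] at h; linarith [hp0.1]
        · exact h.2
      refine ⟨p.2 / e.2, ⟨by have := hp0.2; positivity, by rw [div_le_one h2]; exact hle⟩, ?_⟩
      ext
      · simp [← h1, hp1]
      · simp; field_simp
  · exact hK.segment_subset z he

lemma lexmax_ne {K : Set (ℝ × ℝ)} (hq : ∀ p ∈ K, 0 ≤ p.1 ∧ 0 ≤ p.2) {e : ℝ × ℝ}
    (hmax : ∀ p ∈ K, p.1 < e.1 ∨ (p.1 = e.1 ∧ p.2 ≤ e.2)) (hn : ∃ p ∈ K, p ≠ 0) : e ≠ 0 := by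
  rintro rfl
  obtain ⟨p, hp, hp0⟩ := hn
  have h1 := hq p hp
  apply hp0
  rcases hmax p hp with h | h
  · exact absurd h (not_lt.2 h1.1)
  · exact Prod.ext h.1 (le_antisymm h.2 h1.2)

/-- `ν∞(f, g) = 0` iff both Newton diagrams are segments lying on one and the
same straight line through the origin. -/
theorem stmt5 (f g : P2) (hf : QuasiConvenient f) (hg : QuasiConvenient g)
    (hdf : 0 < f.totalDegree) (hdg : 0 < g.totalDegree) :
    nuInf f g = 0 ↔
      ∃ v : ℝ × ℝ, ∃ a b c d : ℝ,
        newton f = segment ℝ (a • v) (b • v) ∧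
        newton g = segment ℝ (c • v) (d • v) := by
  have qf := fun p (hp : p ∈ newton f) => newton_quad f hp
  have qg := fun p (hp : p ∈ newton g) => newton_quad g hp
  have hfin : ∀ h : P2, volume (newton h) ≠ ⊤ := fun h => (newton_compact h).measure_lt_top.ne
  constructor
  · intro h
    obtain ⟨e, he, hemax⟩ := lexmax (newton_compact f) ⟨0, zero_newton f⟩
    obtain ⟨u, hu, humax⟩ := lexmax (newton_compact g) ⟨0, zero_newton g⟩
    have e0 := lexmax_ne qf hemax (newton_nonzero f hdf)
    have u0 := lexmax_ne qg humax (newton_nonzero g hdg)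
    have hdep : ∀ a ∈ newton f, ∀ b ∈ newton g, a.1 * b.2 - a.2 * b.1 = 0 := by
      by_contra! hcon
      obtain ⟨a, ha, b, hb, hab⟩ := hcon
      have hs := strict (newton_compact f) (newton_compact g) (newton_convex f)
        (newton_convex g) (zero_newton f) (zero_newton g) qg he e0 hemax qf ha hb hab
      have hs2 := hs.trans_le (measure_mono (newton_mul_sup f g hf hg))
      have hs3 := (ENNReal.toReal_lt_toReal
        (ENNReal.add_ne_top.2 ⟨hfin f, hfin g⟩) (hfin (f * g))).2 hs2
      rw [ENNReal.toReal_add (hfin f) (hfin g)] at hs3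
      simp only [nuInf, area] at h
      linarith
    have heu := hdep e he u hu
    -- `u` is a multiple of `e`
    have hmul : ∃ s : ℝ, u = s • e := by
      by_cases h1 : e.1 = 0
      · have h2 : e.2 ≠ 0 := fun h2 => e0 (Prod.ext h1 h2)
        refine ⟨u.2 / e.2, ?_⟩
        ext
        · simp; field_simp; linarith
        · simp; field_simp
      · refine ⟨u.1 / e.1, ?_⟩
        ext
        · simp; field_simp
        · simp; field_simp; linarith
    obtain ⟨s, hs⟩ := hmul
    have hs0 : s ≠ 0 := by rintro rfl; simp at hs; exact u0 hs
    have hu1 : u.1 = s * e.1 := by rw [hs]; simp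
    have hu2 : u.2 = s * e.2 := by rw [hs]; simp
    refine ⟨e, 0, 1, 0, s, ?_, ?_⟩
    · rw [zero_smul, one_smul]
      refine ray (newton_convex f) (zero_newton f) qf he e0 hemax fun p hp => ?_
      have := hdep p hp u hu
      rw [hu1, hu2] at this
      have h3 : s * (e.1 * p.2 - e.2 * p.1) = 0 := by linear_combination -this
      exact (mul_eq_zero.1 h3).resolve_left hs0
    · rw [zero_smul, ← hs]
      refine ray (newton_convex g) (zero_newton g) qg hu u0 humax fun p hp => ?_
      have := hdep e he p hp
      rw [hu1, hu2]
      linear_combination s * this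
  · rintro ⟨v, a, b, c, d, h1, h2⟩
    have sv : ∀ x y : ℝ, segment ℝ (x • v) (y • v) ⊆
        ((Submodule.span ℝ {v} : Submodule ℝ (ℝ × ℝ)) : Set (ℝ × ℝ)) := fun x y =>
      (Submodule.convex _).segment_subset
        (Submodule.smul_mem _ _ (Submodule.mem_span_singleton_self v))
        (Submodule.smul_mem _ _ (Submodule.mem_span_singleton_self v))
    have sf : newton f ⊆ _ := h1.trans_subset (sv a b)
    have sg : newton g ⊆ _ := h2.trans_subset (sv c d)
    have sfg : newton (f * g) ⊆
        ((Submodule.span ℝ {v} : Submodule ℝ (ℝ × ℝ)) : Set (ℝ × ℝ)) := by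
      intro p hp
      obtain ⟨x, hx, y, hy, rfl⟩ := newton_mul_sub f g hp
      exact Submodule.add_mem _ (sf hx) (sg hy)
    simp only [nuInf, area]
    rw [measure_mono_null sf (span_null v), measure_mono_null sg (span_null v),
      measure_mono_null sfg (span_null v)]
    simp
end
end

section
/- Main theorem (near irreducibility criterion): Let f ∈ ℂ[X,Y] be quasi-convenient and nondegenerate at infinity, and suppose that for every nonzero vector w = [p,q] with pq ≤ 0, the system init(f,w)(X,Y) = init(f,−w)(X,Y) = 0 has no solution in (ℂ*)². Then f is nearly irreducible: any two nonconstant polynomial factors of f have a common zero in ℂ². -/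
open MvPolynomial MeasureTheory Pointwise

noncomputable section

/-! ### Basic facts on initial forms -/

lemma wt_add (w : ℝ × ℝ) (m n : Fin 2 →₀ ℕ) : wt w (m + n) = wt w m + wt w n := by
  simp only [wt, Finsupp.add_apply, Nat.cast_add]; ring

lemma wt_le_dw (w : ℝ × ℝ) (f : P2) {m : Fin 2 →₀ ℕ} (hm : m ∈ f.support) :
    wt w m ≤ dw w f := by
  apply le_csSup
  · exact (f.support.finite_toSet.image _).bddAbove
  · exact ⟨m, hm, rfl⟩

lemma exists_wt_eq_dw (w : ℝ × ℝ) {f : P2} (hf : f ≠ 0) :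
    ∃ m ∈ f.support, wt w m = dw w f := by
  have hne : (wt w '' (f.support : Set (Fin 2 →₀ ℕ))).Nonempty := by
    apply Set.Nonempty.image
    obtain ⟨m, hm⟩ := (MvPolynomial.support_nonempty).2 hf
    exact ⟨m, hm⟩
  obtain ⟨m, hm, h⟩ := hne.csSup_mem (f.support.finite_toSet.image _)
  exact ⟨m, hm, h⟩

lemma dw_eq (w : ℝ × ℝ) (f : P2) (d : ℝ) (h1 : ∀ m ∈ f.support, wt w m ≤ d)
    (h2 : ∃ m ∈ f.support, wt w m = d) : dw w f = d := by
  obtain ⟨m, hm, h⟩ := h2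
  apply le_antisymm
  · have hf : f ≠ 0 := by rintro rfl; simp at hm
    obtain ⟨n, hn, h'⟩ := exists_wt_eq_dw w hf
    rw [← h']; exact h1 n hn
  · rw [← h]; exact wt_le_dw w f hm

open Classical in
lemma coeff_initForm (w : ℝ × ℝ) (f : P2) (m : Fin 2 →₀ ℕ) :
    (initForm w f).coeff m = if wt w m = dw w f then f.coeff m else 0 := by
  rw [initForm, MvPolynomial.coeff_sum]
  have : ∀ n ∈ f.support, coeff m (if wt w n = dw w f then monomial n (coeff n f) else 0)
      = if n = m then (if wt w m = dw w f then f.coeff m else 0) else 0 := by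
    intro n _
    by_cases h : n = m
    · subst h
      rw [if_pos rfl]
      split_ifs <;> simp
    · split_ifs <;> simp [coeff_monomial, h]
  rw [Finset.sum_congr rfl this, Finset.sum_ite_eq']
  split_ifs with h1 h2 h2
  · rfl
  · rfl
  · simpa using (notMem_support_iff.1 h1).symm
  · rfl

lemma mem_support_initForm (w : ℝ × ℝ) (f : P2) (m : Fin 2 →₀ ℕ) :
    m ∈ (initForm w f).support ↔ m ∈ f.support ∧ wt w m = dw w f := by
  classical
  rw [mem_support_iff, coeff_initForm, mem_support_iff]
  split_ifs with h <;> simp [h]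

lemma initForm_ne_zero (w : ℝ × ℝ) {f : P2} (hf : f ≠ 0) : initForm w f ≠ 0 := by
  obtain ⟨m, hm, h⟩ := exists_wt_eq_dw w hf
  intro h0
  have := (mem_support_initForm w f m).2 ⟨hm, h⟩
  simp [h0] at this

lemma init_char (w : ℝ × ℝ) (A B : P2) (d : ℝ) (hA : A ≠ 0)
    (h1 : ∀ m ∈ A.support, wt w m = d) (h2 : ∀ m ∈ B.support, wt w m < d) :
    dw w (A + B) = d ∧ initForm w (A + B) = A := by
  classical
  have hB : ∀ m, wt w m = d → coeff m B = 0 := by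
    intro m hm
    by_contra h
    exact (h2 m (mem_support_iff.2 h)).ne hm
  have hA' : ∀ m, wt w m ≠ d → coeff m A = 0 := by
    intro m hm
    by_contra h
    exact hm (h1 m (mem_support_iff.2 h))
  have hd : dw w (A + B) = d := by
    apply dw_eq
    · intro m hm
      rcases Finset.mem_union.1 (support_add hm) with h | h
      · exact (h1 m h).le
      · exact (h2 m h).le
    · obtain ⟨m, hm⟩ := (MvPolynomial.support_nonempty).2 hA
      refine ⟨m, ?_, h1 m hm⟩
      rw [mem_support_iff, coeff_add, hB m (h1 m hm), add_zero]
      exact mem_support_iff.1 hm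
  refine ⟨hd, ?_⟩
  ext m
  rw [coeff_initForm, hd, coeff_add]
  split_ifs with h
  · rw [hB m h, add_zero]
  · rw [hA' m h]

lemma rest_lt (w : ℝ × ℝ) (f : P2) : ∀ m ∈ (f - initForm w f).support, wt w m < dw w f := by
  classical
  intro m hm
  rw [mem_support_iff, coeff_sub, coeff_initForm] at hm
  split_ifs at hm with h
  · simp at hm
  · exact lt_of_le_of_ne (wt_le_dw w f (mem_support_iff.2 (by simpa using hm))) h

lemma initForm_mul (w : ℝ × ℝ) {f g : P2} (hf : f ≠ 0) (hg : g ≠ 0) :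
    initForm w (f * g) = initForm w f * initForm w g := by
  classical
  have key : f * g = initForm w f * initForm w g +
      (initForm w f * (g - initForm w g) + (f - initForm w f) * g) := by ring
  have := (init_char w (initForm w f * initForm w g)
    (initForm w f * (g - initForm w g) + (f - initForm w f) * g) (dw w f + dw w g)
    (mul_ne_zero (initForm_ne_zero w hf) (initForm_ne_zero w hg)) ?_ ?_).2
  · rw [← key] at this; exact this
  · intro m hm
    obtain ⟨a, ha, b, hb, rfl⟩ := Finset.mem_add.1 (support_mul _ _ hm)
    rw [wt_add, ((mem_support_initForm w f a).1 ha).2, ((mem_support_initForm w g b).1 hb).2]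
  · intro m hm
    rcases Finset.mem_union.1 (support_add hm) with h | h
    · obtain ⟨a, ha, b, hb, rfl⟩ := Finset.mem_add.1 (support_mul _ _ h)
      rw [wt_add, ((mem_support_initForm w f a).1 ha).2]
      have := rest_lt w g b hb
      linarith
    · obtain ⟨a, ha, b, hb, rfl⟩ := Finset.mem_add.1 (support_mul _ _ h)
      rw [wt_add]
      have := rest_lt w f a ha
      have := wt_le_dw w g hb
      linarith

/-! ### Nullstellensatz consequences -/

lemma aeval_vec (z : Fin 2 → ℂ) (p : P2) : aeval z p = eval ![z 0, z 1] p := by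
  have : z = ![z 0, z 1] := by ext i; fin_cases i <;> rfl
  rw [← this]; rfl

lemma torus_null {a b : P2}
    (h : ¬ ∃ x y : ℂ, x ≠ 0 ∧ y ≠ 0 ∧ eval ![x, y] a = 0 ∧ eval ![x, y] b = 0) :
    ∃ (n : ℕ) (A B : P2), A * a + B * b = (X 0 * X 1) ^ n := by
  have hmem : (X 0 * X 1 : P2) ∈ (Ideal.span {a, b}).radical := by
    rw [← vanishingIdeal_zeroLocus_eq_radical (K := ℂ), mem_vanishingIdeal_iff]
    intro z hz
    rw [zeroLocus_span] at hz
    have ha := hz a (by simp)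
    have hb := hz b (by simp)
    rw [aeval_vec] at ha hb
    by_contra hne
    simp only [map_mul, aeval_X, mul_eq_zero, not_or] at hne
    exact h ⟨z 0, z 1, hne.1, hne.2, ha, hb⟩
  obtain ⟨n, hn⟩ := hmem
  obtain ⟨A, B, hAB⟩ := Ideal.mem_span_pair.1 hn
  exact ⟨n, A, B, hAB⟩

lemma plane_null {a b : P2}
    (h : ¬ ∃ x y : ℂ, eval ![x, y] a = 0 ∧ eval ![x, y] b = 0) :
    ∃ (A B : P2), A * a + B * b = 1 := by
  have hmem : (1 : P2) ∈ (Ideal.span {a, b}).radical := by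
    rw [← vanishingIdeal_zeroLocus_eq_radical (K := ℂ), mem_vanishingIdeal_iff]
    intro z hz
    rw [zeroLocus_span] at hz
    have ha := hz a (by simp)
    have hb := hz b (by simp)
    rw [aeval_vec] at ha hb
    exact absurd ⟨z 0, z 1, ha, hb⟩ h
  obtain ⟨n, hn⟩ := hmem
  rw [one_pow] at hn
  exact Ideal.mem_span_pair.1 hn

/-- A polynomial with no zero in the torus is a monomial. -/
lemma torus_monomial {a : P2} (h : ¬ ∃ x y : ℂ, x ≠ 0 ∧ y ≠ 0 ∧ eval ![x, y] a = 0) :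
    ∃ m c, a = monomial m c := by
  obtain ⟨n, A, B, hAB⟩ := torus_null (a := a) (b := a)
    (by rintro ⟨x, y, hx, hy, h1, -⟩; exact h ⟨x, y, hx, hy, h1⟩)
  have hd : a ∣ (X 0 * X 1) ^ n := ⟨A + B, by rw [← hAB]; ring⟩
  have hm : ((X 0 * X 1) ^ n : P2) =
      monomial (n • (Finsupp.single 0 1 + Finsupp.single 1 1)) 1 := by
    rw [X, X, monomial_mul, monomial_pow]; simp
  rw [hm, dvd_monomial_iff_exists one_ne_zero] at hd
  obtain ⟨m, c, -, -, hc⟩ := hd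
  exact ⟨m, c, hc⟩

/-! ### Valuations -/

section Val

variable {K : Type*} [Field K] [Algebra ℂ K] {Γ : Type*} [LinearOrderedCommGroupWithZero Γ]

lemma group_commens (α β : Γ) (hα : α ≠ 0) (hβ : β ≠ 0) (i j : ℤ) (hij : i ≠ 0 ∨ j ≠ 0)
    (h : α ^ i = β ^ j) :
    ∃ s r p q : ℤ, α = (α ^ s * β ^ r) ^ p ∧ β = (α ^ s * β ^ r) ^ q := by
  have hd : 0 < Int.gcd i j := by
    rw [Int.gcd_pos_iff]; exact hij
  obtain ⟨i', j', hco, hi, hj⟩ := Int.exists_gcd_one hd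
  have hco' : IsCoprime i' j' := Int.isCoprime_iff_gcd_eq_one.2 hco
  obtain ⟨r, s, hrs⟩ := hco'
  have h' : α ^ i' = β ^ j' := by
    have h1 : (α ^ i') ^ (Int.gcd i j) = (β ^ j') ^ (Int.gcd i j) := by
      rw [← zpow_natCast, ← zpow_natCast, ← zpow_mul, ← zpow_mul, ← hi, ← hj, h]
    exact (pow_left_inj₀ zero_le zero_le hd.ne').1 h1
  refine ⟨s, r, j', i', ?_, ?_⟩
  · calc α = α ^ (r * i' + s * j') := by rw [hrs, zpow_one]
      _ = (α ^ i') ^ r * (α ^ s) ^ j' := by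
        rw [zpow_add₀ hα, mul_comm r i', zpow_mul, zpow_mul]
      _ = _ := by
        rw [h', mul_zpow, mul_comm, ← zpow_mul β, ← zpow_mul β, mul_comm j' r]
  · calc β = β ^ (r * i' + s * j') := by rw [hrs, zpow_one]
      _ = (β ^ j') ^ s * (β ^ r) ^ i' := by
        rw [zpow_add₀ hβ, mul_comm s j', zpow_mul, zpow_mul, mul_comm]
      _ = _ := by
        rw [← h', mul_zpow, ← zpow_mul α, ← zpow_mul α, mul_comm i' s]

lemma aeval_two_eq_sum (x y : K) (F : P2) :
    aeval ![x, y] F = ∑ m ∈ F.support, algebraMap ℂ K (F.coeff m) * (x ^ m 0 * y ^ m 1) := by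
  rw [aeval_eq_eval₂Hom, coe_eval₂Hom, eval₂_eq]
  apply Finset.sum_congr rfl
  intro m _
  congr 1
  have h2 : x ^ m 0 * y ^ m 1 = ∏ i, ![x, y] i ^ m i := by
    rw [Fin.prod_univ_two]; rfl
  rw [h2]
  apply Finset.prod_subset (Finset.subset_univ _)
  intro i _ hi
  rw [Finsupp.notMem_support_iff.1 hi, pow_zero]

lemma val_aeval_le_one (v : Valuation K Γ)
    (hC : ∀ c : ℂ, c ≠ 0 → v (algebraMap ℂ K c) = 1) {x y : K} (hx : v x ≤ 1) (hy : v y ≤ 1) (F : P2) :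
    v (aeval ![x, y] F) ≤ 1 := by
  rw [aeval_two_eq_sum]
  apply v.map_sum_le
  intro m hm
  rw [map_mul, hC _ (mem_support_iff.1 hm), one_mul, map_mul, map_pow, map_pow]
  exact mul_le_one' (pow_le_one' hx _) (pow_le_one' hy _)

lemma exists_two (v : Valuation K Γ)
    (hC : ∀ c : ℂ, c ≠ 0 → v (algebraMap ℂ K c) = 1) {x y : K} (hx : x ≠ 0) (hy : y ≠ 0) {g : P2} (hg : g ≠ 0)
    (h0 : aeval ![x, y] g = 0) :
    ∃ i j : ℤ, (i ≠ 0 ∨ j ≠ 0) ∧ v x ^ i = v y ^ j := by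
  classical
  obtain ⟨m, hm, hmax⟩ := Finset.exists_max_image g.support
    (fun m => v x ^ m 0 * v y ^ m 1) (MvPolynomial.support_nonempty.2 hg)
  have hvx : v x ≠ 0 := (v.ne_zero_iff).2 hx
  have hvy : v y ≠ 0 := (v.ne_zero_iff).2 hy
  have hval : ∀ n ∈ g.support, v (algebraMap ℂ K (g.coeff n) * (x ^ n 0 * y ^ n 1))
      = v x ^ n 0 * v y ^ n 1 := by
    intro n hn
    rw [map_mul, hC _ (mem_support_iff.1 hn), one_mul, map_mul, map_pow, map_pow]
  have : ∃ n ∈ g.support, n ≠ m ∧ v x ^ n 0 * v y ^ n 1 = v x ^ m 0 * v y ^ m 1 := by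
    by_contra hcon
    push Not at hcon
    have hne : v x ^ m 0 * v y ^ m 1 ≠ 0 := mul_ne_zero (pow_ne_zero _ hvx) (pow_ne_zero _ hvy)
    have := v.map_sum_eq_of_lt (s := g.support)
      (f := fun n => algebraMap ℂ K (g.coeff n) * (x ^ n 0 * y ^ n 1)) (j := m) hm
      (by
        intro n hn
        rw [Finset.mem_sdiff, Finset.mem_singleton] at hn
        rw [hval n hn.1, hval m hm]
        exact lt_of_le_of_ne (hmax n hn.1) (hcon n hn.1 hn.2))
    rw [← aeval_two_eq_sum, h0, map_zero, hval m hm] at this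
    exact hne this.symm
  obtain ⟨n, hn, hnm, heq⟩ := this
  refine ⟨(n 0 : ℤ) - m 0, (m 1 : ℤ) - n 1, ?_, ?_⟩
  · by_contra hcon
    push Not at hcon
    apply hnm
    ext i
    fin_cases i
    · simp; omega
    · simp; omega
  · rw [zpow_sub₀ hvx, zpow_sub₀ hvy, div_eq_div_iff (zpow_ne_zero _ hvx) (zpow_ne_zero _ hvy)]
    simp only [zpow_natCast]
    rw [heq, mul_comm]

lemma val_init_lt (v : Valuation K Γ)
    (hC : ∀ c : ℂ, c ≠ 0 → v (algebraMap ℂ K c) = 1) {x y z : K} (hz : z ≠ 0) (p q : ℤ) (hvz : 1 < v z)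
    (hx : v x = v z ^ p) (hy : v y = v z ^ q) {F : P2} (hF : F ≠ 0)
    (hd : ∀ D : ℤ, (D : ℝ) = dw ((p : ℝ), (q : ℝ)) F → v (aeval ![x, y] F) < v z ^ D) :
    v (aeval ![x * z ^ (-p), y * z ^ (-q)] (initForm ((p : ℝ), (q : ℝ)) F)) < 1 := by
  classical
  set w : ℝ × ℝ := ((p : ℝ), (q : ℝ)) with hw
  have hN : ∀ m : Fin 2 →₀ ℕ, wt w m = ((p * m 0 + q * m 1 : ℤ) : ℝ) := by
    intro m; simp [wt, hw]
  obtain ⟨m0, hm0, hwt⟩ := exists_wt_eq_dw w hF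
  obtain ⟨D, hD⟩ : ∃ D : ℤ, (D : ℝ) = dw w F := ⟨_, by rw [← hwt, hN]⟩
  have h1 := hd D hD
  have hvz0 : v z ≠ 0 := (v.ne_zero_iff).2 hz
  have hξ : v (x * z ^ (-p)) = 1 := by
    rw [map_mul, map_zpow₀, hx, ← zpow_add₀ hvz0]; simp
  have hη : v (y * z ^ (-q)) = 1 := by
    rw [map_mul, map_zpow₀, hy, ← zpow_add₀ hvz0]; simp
  have key : aeval ![x * z ^ (-p), y * z ^ (-q)] (initForm w F) =
      z ^ (-D) * aeval ![x, y] F - ∑ m ∈ F.support with wt w m ≠ dw w F,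
        z ^ (-D) * (algebraMap ℂ K (F.coeff m) * (x ^ m 0 * y ^ m 1)) := by
    rw [eq_sub_iff_add_eq, aeval_two_eq_sum x y F, Finset.mul_sum,
      ← Finset.sum_filter_add_sum_filter_not F.support (fun m => wt w m = dw w F)]
    congr 1
    rw [aeval_two_eq_sum]
    have hs : (initForm w F).support = F.support.filter (fun m => wt w m = dw w F) := by
      ext m; rw [mem_support_initForm, Finset.mem_filter]
    rw [hs]
    apply Finset.sum_congr rfl
    intro m hm
    have hm' := (Finset.mem_filter.1 hm).2
    rw [coeff_initForm, if_pos hm']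
    rw [← hD, hN] at hm'
    have hm'' : p * m 0 + q * m 1 = D := by exact_mod_cast hm'
    rw [← hm'', neg_add, zpow_add₀ hz, mul_pow, mul_pow, ← zpow_natCast (z ^ (-p)),
      ← zpow_natCast (z ^ (-q)), ← zpow_mul, ← zpow_mul, neg_mul, neg_mul]
    ring
  rw [key]
  refine lt_of_le_of_lt (v.map_sub _ _) (max_lt ?_ ?_)
  · rw [map_mul, map_zpow₀, zpow_neg, inv_mul_lt_iff₀ (zpow_pos (zero_lt_iff.2 hvz0) _), mul_one]
    exact h1
  · apply v.map_sum_lt one_ne_zero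
    intro m hm
    obtain ⟨hm1, hm2⟩ := Finset.mem_filter.1 hm
    have hlt : wt w m < dw w F := lt_of_le_of_ne (wt_le_dw w F hm1) hm2
    rw [← hD, hN] at hlt
    have hlt' : p * m 0 + q * m 1 < D := by exact_mod_cast hlt
    rw [map_mul, map_mul, hC _ (mem_support_iff.1 hm1), one_mul, map_mul, map_pow, map_pow,
      map_zpow₀, zpow_neg, inv_mul_lt_iff₀ (zpow_pos (zero_lt_iff.2 hvz0) _), mul_one, hx, hy,
      ← zpow_natCast, ← zpow_natCast, ← zpow_mul, ← zpow_mul, ← zpow_add₀ hvz0]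
    exact zpow_lt_zpow_right₀ hvz hlt'

lemma dw_nonneg {w : ℝ × ℝ} (hw : 0 < w.1 ∨ 0 < w.2) {h : P2} (hh : QuasiConvenient h) :
    0 ≤ dw w h := by
  obtain ⟨⟨a, ha⟩, ⟨b, hb⟩⟩ := hh
  rcases hw with hw | hw
  · refine le_trans ?_ (wt_le_dw w h (mem_support_iff.2 ha))
    simp [wt]; positivity
  · refine le_trans ?_ (wt_le_dw w h (mem_support_iff.2 hb))
    simp [wt]; positivity

lemma qc_ne_zero {h : P2} (hh : QuasiConvenient h) : h ≠ 0 := by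
  rintro rfl
  obtain ⟨⟨a, ha⟩, -⟩ := hh
  simp at ha

lemma val_main (v : Valuation K Γ)
    (hC : ∀ c : ℂ, c ≠ 0 → v (algebraMap ℂ K c) = 1) {g h : P2} (hg : g ≠ 0) (hh : QuasiConvenient h) (hnd : PairNondegAtInf g h)
    {x y : K} (hx : x ≠ 0) (hy : y ≠ 0) (hgx : aeval ![x, y] g = 0)
    (hhx : v (aeval ![x, y] h) < 1) (hxy : 1 < v x ∨ 1 < v y) : False := by
  have hvx : v x ≠ 0 := (v.ne_zero_iff).2 hx
  have hvy : v y ≠ 0 := (v.ne_zero_iff).2 hy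
  obtain ⟨i, j, hij, he⟩ := exists_two v hC hx hy hg hgx
  obtain ⟨s, r, p, q, hp, hq⟩ := group_commens (v x) (v y) hvx hvy i j hij he
  have : ∃ (z : K) (p q : ℤ), z ≠ 0 ∧ 1 < v z ∧ v x = v z ^ p ∧ v y = v z ^ q := by
    have hz0 : x ^ s * y ^ r ≠ 0 := mul_ne_zero (zpow_ne_zero _ hx) (zpow_ne_zero _ hy)
    have hvz : v (x ^ s * y ^ r) = v x ^ s * v y ^ r := by
      rw [map_mul, map_zpow₀, map_zpow₀]
    rcases lt_trichotomy (v (x ^ s * y ^ r)) 1 with h1 | h1 | h1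
    · refine ⟨(x ^ s * y ^ r)⁻¹, -p, -q, inv_ne_zero hz0, ?_, ?_, ?_⟩
      · rw [map_inv₀]
        exact (one_lt_inv₀ (zero_lt_iff.2 ((v.ne_zero_iff).2 hz0))).2 h1
      · rw [map_inv₀, inv_zpow', neg_neg, hvz]; exact hp
      · rw [map_inv₀, inv_zpow', neg_neg, hvz]; exact hq
    · rw [← hvz, h1, one_zpow] at hp hq
      rw [hp, hq] at hxy
      simp at hxy
    · exact ⟨_, p, q, hz0, h1, by rw [hvz]; exact hp, by rw [hvz]; exact hq⟩
  clear hp hq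
  obtain ⟨z, p, q, hz, hvz, hp, hq⟩ := this
  have hw : 0 < ((p : ℝ), (q : ℝ)).1 ∨ 0 < ((p : ℝ), (q : ℝ)).2 := by
    simp only [Int.cast_pos]
    rw [hp, hq, one_lt_zpow_iff_right₀ hvz, one_lt_zpow_iff_right₀ hvz] at hxy
    exact hxy
  have hvz0 : v z ≠ 0 := (v.ne_zero_iff).2 hz
  have h1 := val_init_lt v hC hz p q hvz hp hq hg (by
    intro D _
    rw [hgx, map_zero]; exact zpow_pos (zero_lt_iff.2 hvz0) _)
  have h2 := val_init_lt v hC hz p q hvz hp hq (qc_ne_zero hh) (by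
    intro D hD
    refine lt_of_lt_of_le hhx ?_
    have := dw_nonneg hw hh
    rw [← hD] at this
    exact one_le_zpow₀ hvz.le (by exact_mod_cast this))
  have hξ : v (x * z ^ (-p)) = 1 := by
    rw [map_mul, map_zpow₀, hp, ← zpow_add₀ hvz0]; simp
  have hη : v (y * z ^ (-q)) = 1 := by
    rw [map_mul, map_zpow₀, hq, ← zpow_add₀ hvz0]; simp
  obtain ⟨n, A, B, hAB⟩ := torus_null (hnd _ hw)
  have h3 := congrArg (fun F => v (aeval ![x * z ^ (-p), y * z ^ (-q)] F)) hAB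
  simp only [map_add, map_mul, map_pow, aeval_X, Matrix.cons_val_zero, Matrix.cons_val_one] at h3
  rw [← map_mul v x, ← map_mul v y, hξ, hη, mul_one, one_pow] at h3
  refine absurd h3 (ne_of_lt ?_)
  refine lt_of_le_of_lt (v.map_add _ _) (max_lt ?_ ?_)
  · rw [map_mul]
    exact mul_lt_one_of_nonneg_of_lt_one_right (val_aeval_le_one v hC hξ.le hη.le A) zero_le h1
  · rw [map_mul]
    exact mul_lt_one_of_nonneg_of_lt_one_right (val_aeval_le_one v hC hξ.le hη.le B) zero_le h2

end Val

/-! ### Quasi-convenient polynomials and factors -/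

lemma X_dvd_iff_coeff (i : Fin 2) (f : P2) :
    (X i : P2) ∣ f ↔ ∀ m : Fin 2 →₀ ℕ, m i = 0 → coeff m f = 0 := by
  classical
  constructor
  · rintro ⟨k, rfl⟩ m hm
    rw [coeff_X_mul', if_neg]
    simpa using hm
  · intro h
    rw [X_dvd_iff_modMonomial_eq_zero]
    ext m
    by_cases hm : Finsupp.single i 1 ≤ m
    · rw [coeff_modMonomial_of_le _ hm, coeff_zero]
    · rw [coeff_modMonomial_of_not_le _ hm, coeff_zero]
      apply h
      by_contra h0
      apply hm
      rw [Finsupp.single_le_iff]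
      omega

lemma qc_iff (f : P2) : QuasiConvenient f ↔ ¬ (X 1 : P2) ∣ f ∧ ¬ (X 0 : P2) ∣ f := by
  rw [X_dvd_iff_coeff, X_dvd_iff_coeff, QuasiConvenient]
  push Not
  constructor
  · rintro ⟨⟨a, ha⟩, ⟨b, hb⟩⟩
    exact ⟨⟨_, by simp, ha⟩, ⟨_, by simp, hb⟩⟩
  · rintro ⟨⟨m, hm, ha⟩, ⟨n, hn, hb⟩⟩
    refine ⟨⟨m 0, ?_⟩, ⟨n 1, ?_⟩⟩
    · convert ha
      ext i; fin_cases i <;> simp [hm]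
    · convert hb
      ext i; fin_cases i <;> simp [hn]

lemma qc_of_dvd {f g : P2} (h : g ∣ f) (hf : QuasiConvenient f) : QuasiConvenient g := by
  rw [qc_iff] at *
  exact ⟨fun h' => hf.1 (h'.trans h), fun h' => hf.2 (h'.trans h)⟩

lemma pairNondeg_symm {g h : P2} (H : PairNondegAtInf g h) : PairNondegAtInf h g := by
  rintro w hw ⟨x, y, hx, hy, h1, h2⟩
  exact H w hw ⟨x, y, hx, hy, h2, h1⟩

lemma pairNondeg_of_dvd {f g h : P2} (hf : f ≠ 0) (hd : g * h ∣ f) (hnd : NondegAtInf f) :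
    PairNondegAtInf g h := by
  obtain ⟨k, rfl⟩ := hd
  have hk : k ≠ 0 := right_ne_zero_of_mul hf
  have hgh : g * h ≠ 0 := left_ne_zero_of_mul hf
  have hg : g ≠ 0 := left_ne_zero_of_mul hgh
  have hh : h ≠ 0 := right_ne_zero_of_mul hgh
  rintro w hw ⟨x, y, hx, hy, h1, h2⟩
  refine hnd w hw ⟨x, y, hx, hy, ?_, ?_, ?_⟩
  all_goals
    rw [initForm_mul w hgh hk, initForm_mul w hg hh]
    simp [Derivation.leibniz, h1, h2]

/-! ### A unit on an irreducible curve with poles at infinity is constant -/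

lemma const_mod {g h : P2} (hg : Irreducible g) (hqg : QuasiConvenient g)
    (hqh : QuasiConvenient h) (hnd : PairNondegAtInf g h) {A B : P2} (hAB : A * g + B * h = 1) :
    ∃ c : ℂ, c ≠ 0 ∧ g ∣ h - C c := by
  have hprime : (Ideal.span {g} : Ideal P2).IsPrime :=
    (Ideal.span_singleton_prime hg.ne_zero).2 hg.prime
  let Q := P2 ⧸ (Ideal.span {g} : Ideal P2)
  let K := FractionRing Q
  let φ : P2 →ₐ[ℂ] K :=
    (IsScalarTower.toAlgHom ℂ Q K).comp (Ideal.Quotient.mkₐ ℂ (Ideal.span {g}))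
  have hφ0 : ∀ F : P2, φ F = 0 ↔ g ∣ F := by
    intro F
    have : φ F = algebraMap Q K (Ideal.Quotient.mk _ F) := rfl
    rw [this, FaithfulSMul.algebraMap_eq_zero_iff, Ideal.Quotient.eq_zero_iff_mem,
      Ideal.mem_span_singleton]
  have hφ : φ = aeval ![φ (X 0), φ (X 1)] := by
    ext i; fin_cases i <;> simp
  have hX : ∀ i : Fin 2, φ (X i) ≠ 0 := by
    intro i h0
    rw [hφ0] at h0
    have hXi : Irreducible (X i : P2) := (MvPolynomial.X_prime (i := i)).irreducible
    have h1 := (hg.associated_of_dvd hXi h0).symm.dvd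
    rw [qc_iff] at hqg
    fin_cases i
    · exact hqg.2 h1
    · exact hqg.1 h1
  have hu : φ B * φ h = 1 := by
    have h1 := congrArg φ hAB
    rwa [map_add, map_mul, map_mul, (hφ0 g).2 dvd_rfl, mul_zero, zero_add, map_one] at h1
  have hh0 : φ h ≠ 0 := right_ne_zero_of_mul_eq_one hu
  have huinv : φ h = (φ B)⁻¹ := eq_inv_of_mul_eq_one_right hu
  by_cases hmem : φ B ∈ (⊥ : Subalgebra ℂ K).toSubring
  · obtain ⟨c, hc⟩ := Algebra.mem_bot.1 hmem
    have hc0 : c ≠ 0 := by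
      rintro rfl
      rw [← hc, map_zero, zero_mul] at hu
      exact zero_ne_one hu
    refine ⟨c⁻¹, inv_ne_zero hc0, ?_⟩
    rw [← hφ0, map_sub, huinv, ← hc, ← map_inv₀, sub_eq_zero]
    exact (φ.commutes c⁻¹).symm
  · exfalso
    have hcl : IsIntegrallyClosedIn (⊥ : Subalgebra ℂ K).toSubring K := by
      rw [Subring.isIntegrallyClosedIn_iff]
      intro t ht
      have ht' : IsIntegral (⊥ : Subalgebra ℂ K) t := ht
      have ht2 : IsIntegral ℂ t := isIntegral_trans t ht'
      have hdeg := IsAlgClosed.degree_eq_one_of_irreducible ℂ (minpoly.irreducible ht2)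
      exact Algebra.mem_bot.2 (minpoly.mem_range_of_degree_eq_one ℂ t hdeg)
    obtain ⟨V, hV, hBV⟩ := Subring.exists_le_valuationSubring_of_isIntegrallyClosedIn hmem
    have hCV : ∀ c : ℂ, V.valuation (algebraMap ℂ K c) ≤ 1 := by
      intro c
      rw [ValuationSubring.valuation_le_one_iff]
      exact hV (Algebra.mem_bot.2 ⟨c, rfl⟩)
    have hC : ∀ c : ℂ, c ≠ 0 → V.valuation (algebraMap ℂ K c) = 1 := by
      intro c hc
      apply le_antisymm (hCV c)
      have h1 := hCV c⁻¹
      rw [map_inv₀, map_inv₀] at h1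
      have h0 : V.valuation (algebraMap ℂ K c) ≠ 0 := by
        rw [Valuation.ne_zero_iff]
        simpa using hc
      exact (inv_le_one₀ (zero_lt_iff.2 h0)).1 h1
    have hB1 : 1 < V.valuation (φ B) := by
      rw [← not_le, ValuationSubring.valuation_le_one_iff]; exact hBV
    have hxy : 1 < V.valuation (φ (X 0)) ∨ 1 < V.valuation (φ (X 1)) := by
      by_contra hcon
      push Not at hcon
      have := val_aeval_le_one V.valuation hC hcon.1 hcon.2 B
      rw [← hφ] at this
      exact absurd hB1 this.not_gt
    refine val_main V.valuation hC hg.ne_zero hqh hnd (hX 0) (hX 1) ?_ ?_ hxy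
    · rw [← hφ]; exact (hφ0 g).2 dvd_rfl
    · rw [← hφ, huinv, map_inv₀]
      exact inv_lt_one_of_one_lt₀ hB1

/-! ### Convex geometry: an edge of the Newton polygon away from the origin -/

lemma exists_edge (S : Finset (Fin 2 →₀ ℕ)) (m n : Fin 2 →₀ ℕ) (hm : m ∈ S) (hn : n ∈ S)
    (hdet : (m 0 : ℝ) * n 1 - m 1 * n 0 ≠ 0) :
    ∃ (w : ℝ × ℝ) (D : ℝ), 0 < D ∧ (∀ k ∈ S, wt w k ≤ D) ∧
      ∃ a ∈ S, ∃ b ∈ S, a ≠ b ∧ wt w a = D ∧ wt w b = D := by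
  classical
  obtain ⟨a, ha, hmax⟩ := Finset.exists_max_image S (fun k => wt (1, 1) k) ⟨m, hm⟩
  have hD : 0 < wt (1, 1) a := by
    refine lt_of_lt_of_le ?_ (hmax m hm)
    by_contra hcon
    apply hdet
    simp only [wt, one_mul, not_lt] at hcon
    have h0 : (0 : ℝ) ≤ m 0 := Nat.cast_nonneg _
    have h1 : (0 : ℝ) ≤ m 1 := Nat.cast_nonneg _
    have h0' : (m 0 : ℝ) = 0 := by linarith
    have h1' : (m 1 : ℝ) = 0 := by linarith
    rw [h0', h1']; ring
  -- a direction orthogonal to `a`, positive on some element of `S`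
  have : ∃ ν : ℝ × ℝ, wt ν a = 0 ∧ ∃ k ∈ S, 0 < wt ν k := by
    have h1 : ∃ k ∈ S, wt (-(a 1 : ℝ), (a 0 : ℝ)) k ≠ 0 := by
      by_contra hcon
      push Not at hcon
      have e1 := hcon m hm
      have e2 := hcon n hn
      simp only [wt, one_mul] at e1 e2 hD
      apply hdet
      have f0 : (a 0 : ℝ) * ((m 0 : ℝ) * n 1 - m 1 * n 0) = 0 := by
        linear_combination (m 0 : ℝ) * e2 - (n 0 : ℝ) * e1
      have f1 : (a 1 : ℝ) * ((m 0 : ℝ) * n 1 - m 1 * n 0) = 0 := by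
        linear_combination (m 1 : ℝ) * e2 - (n 1 : ℝ) * e1
      have f2 : ((a 0 : ℝ) + a 1) * ((m 0 : ℝ) * n 1 - m 1 * n 0) = 0 := by linarith
      exact (mul_eq_zero.1 f2).resolve_left hD.ne'
    obtain ⟨k, hk, hk0⟩ := h1
    rcases lt_or_gt_of_ne hk0 with hlt | hgt
    · refine ⟨((a 1 : ℝ), -(a 0 : ℝ)), by simp only [wt]; ring, k, hk, ?_⟩
      simp only [wt] at hlt ⊢
      linarith
    · exact ⟨(-(a 1 : ℝ), (a 0 : ℝ)), by simp only [wt]; ring, k, hk, hgt⟩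
  obtain ⟨ν, hνa, k, hk, hνk⟩ := this
  obtain ⟨b, hb, hmin⟩ := Finset.exists_min_image (S.filter (fun k => 0 < wt ν k))
    (fun k => (wt (1, 1) a - wt (1, 1) k) / wt ν k) ⟨k, Finset.mem_filter.2 ⟨hk, hνk⟩⟩
  obtain ⟨hbS, hνb⟩ := Finset.mem_filter.1 hb
  set t := (wt (1, 1) a - wt (1, 1) b) / wt ν b with ht
  have ht0 : 0 ≤ t := div_nonneg (sub_nonneg.2 (hmax b hbS)) hνb.le
  have hlin : ∀ k, wt (1 + t * ν.1, 1 + t * ν.2) k = wt (1, 1) k + t * wt ν k := by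
    intro k; simp only [wt]; ring
  refine ⟨(1 + t * ν.1, 1 + t * ν.2), wt (1, 1) a, hD, ?_, a, ha, b, hbS, ?_, ?_, ?_⟩
  · intro k hk
    rw [hlin]
    rcases le_or_gt (wt ν k) 0 with h | h
    · have := hmax k hk
      have := mul_nonpos_of_nonneg_of_nonpos ht0 h
      linarith
    · have := hmin k (Finset.mem_filter.2 ⟨hk, h⟩)
      rw [le_div_iff₀ h] at this
      linarith
  · rintro rfl
    exact hνb.ne' hνa
  · rw [hlin, hνa]; ring
  · rw [hlin, ht, div_mul_cancel₀ _ hνb.ne']; ring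

lemma qc_totalDegree_torus {g : P2} (hq : QuasiConvenient g) (hd : 0 < g.totalDegree) :
    ∃ x y : ℂ, x ≠ 0 ∧ y ≠ 0 ∧ eval ![x, y] g = 0 := by
  classical
  by_contra hcon
  obtain ⟨m, c, rfl⟩ := torus_monomial hcon
  obtain ⟨⟨a, ha⟩, ⟨b, hb⟩⟩ := hq
  rw [coeff_monomial] at ha hb
  have h1 : m = Finsupp.single 0 a := by by_contra h; simp [h] at ha
  have h2 : m = Finsupp.single 1 b := by by_contra h; simp [h] at hb
  have h3 : m = 0 := by
    ext i
    fin_cases i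
    · rw [h2]; simp
    · rw [h1]; simp
  subst h3
  rw [monomial_zero', totalDegree_C] at hd
  exact lt_irrefl _ hd

lemma initForm_of_const {w : ℝ × ℝ} {g : P2} {d : ℝ} (hg : g ≠ 0)
    (h : ∀ m ∈ g.support, wt w m = d) : initForm w g = g := by
  have := (init_char w g 0 d hg h (by simp)).2
  rwa [add_zero] at this

/-- The case `h = c + c₂ g`. -/
lemma final_case {f g h : P2} (hf : f ≠ 0) (hgf : g ∣ f) (hq : QuasiConvenient g)
    (hd : 0 < g.totalDegree) (hnd : PairNondegAtInf g h) {c c2 : ℂ} (hc2 : c2 ≠ 0)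
    (hh : h = C c + C c2 * g)
    (h2 : ∀ w : ℝ × ℝ, w ≠ 0 → w.1 * w.2 ≤ 0 →
      ¬ ∃ x y : ℂ, x ≠ 0 ∧ y ≠ 0 ∧
        eval ![x, y] (initForm w f) = 0 ∧ eval ![x, y] (initForm (-w) f) = 0) : False := by
  classical
  have hg : g ≠ 0 := qc_ne_zero hq
  by_cases hdet : ∃ m ∈ g.support, ∃ n ∈ g.support, (m 0 : ℝ) * n 1 - m 1 * n 0 ≠ 0
  · obtain ⟨m, hm, n, hn, hmn⟩ := hdet
    obtain ⟨w, D, hD, hle, a, ha, b, hb, hab, hwa, hwb⟩ := exists_edge _ m n hm hn hmn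
    have hw : 0 < w.1 ∨ 0 < w.2 := by
      by_contra hcon
      push Not at hcon
      rw [← hwa, wt] at hD
      have := mul_nonpos_of_nonpos_of_nonneg hcon.1 (Nat.cast_nonneg (α := ℝ) (a 0))
      have := mul_nonpos_of_nonpos_of_nonneg hcon.2 (Nat.cast_nonneg (α := ℝ) (a 1))
      linarith
    have hdw : dw w g = D := dw_eq w g D hle ⟨a, ha, hwa⟩
    have hinit : initForm w h = C c2 * initForm w g := by
      have e : h = C c2 * initForm w g + (C c + C c2 * (g - initForm w g)) := by
        rw [hh]; ring
      rw [e]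
      refine (init_char w _ _ D (mul_ne_zero (by simpa using hc2) (initForm_ne_zero w hg))
        ?_ ?_).2
      · intro k hk
        rw [mem_support_iff, coeff_C_mul] at hk
        rw [((mem_support_initForm w g k).1 (mem_support_iff.2 (right_ne_zero_of_mul hk))).2, hdw]
      · intro k hk
        rcases Finset.mem_union.1 (support_add hk) with hk | hk
        · rw [mem_support_iff, coeff_C] at hk
          have : k = 0 := by by_contra h0; simp [Ne.symm h0] at hk
          subst this
          simpa [wt] using hD
        · rw [mem_support_iff, coeff_C_mul] at hk
          rw [← hdw]
          exact rest_lt w g k (mem_support_iff.2 (right_ne_zero_of_mul hk))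
    have : ∃ x y : ℂ, x ≠ 0 ∧ y ≠ 0 ∧ eval ![x, y] (initForm w g) = 0 := by
      by_contra hcon
      obtain ⟨m, c, hmc⟩ := torus_monomial hcon
      have ha' := (mem_support_initForm w g a).2 ⟨ha, by rw [hwa, hdw]⟩
      have hb' := (mem_support_initForm w g b).2 ⟨hb, by rw [hwb, hdw]⟩
      rw [hmc] at ha' hb'
      have e1 := Finset.mem_singleton.1 (support_monomial_subset ha')
      have e2 := Finset.mem_singleton.1 (support_monomial_subset hb')
      exact hab (e1.trans e2.symm)
    obtain ⟨x, y, hx, hy, hxy⟩ := this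
    exact hnd w hw ⟨x, y, hx, hy, hxy, by rw [hinit, map_mul, hxy, mul_zero]⟩
  · push Not at hdet
    obtain ⟨x, y, hx, hy, hxy⟩ := qc_totalDegree_torus hq hd
    have hm : ∃ m ∈ g.support, m ≠ 0 := by
      by_contra hcon
      push Not at hcon
      have : g.totalDegree = 0 := by
        rw [totalDegree_eq_zero_iff]
        intro m hm i
        rw [hcon m hm]; rfl
      omega
    obtain ⟨m, hm, hm0⟩ := hm
    have hi : ∀ w : ℝ × ℝ, initForm w g = g → eval ![x, y] (initForm w f) = 0 := by
      intro w hw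
      obtain ⟨k, rfl⟩ := hgf
      rw [initForm_mul w hg (right_ne_zero_of_mul hf), map_mul, hw, hxy, zero_mul]
    refine h2 ((m 1 : ℝ), -(m 0 : ℝ)) ?_ ?_ ⟨x, y, hx, hy, hi _ ?_, hi _ ?_⟩
    · intro h0
      rw [Prod.mk_eq_zero] at h0
      apply hm0
      ext i
      fin_cases i
      · simpa using h0.2
      · simpa using h0.1
    · have := mul_nonneg (Nat.cast_nonneg (α := ℝ) (m 0)) (Nat.cast_nonneg (α := ℝ) (m 1))
      simp only
      linarith
    · apply initForm_of_const (d := 0) hg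
      intro n hn
      have := hdet m hm n hn
      simp only [wt]; linarith
    · apply initForm_of_const (d := 0) hg
      intro n hn
      have := hdet m hm n hn
      simp only [wt, Prod.fst_neg, Prod.snd_neg]; linarith

lemma totalDegree_pos_of_irreducible {g : P2} (hg : Irreducible g) : 0 < g.totalDegree := by
  by_contra hcon
  have h0 : g.totalDegree = 0 := by omega
  rw [totalDegree_eq_zero_iff_eq_C] at h0
  apply hg.not_isUnit
  rw [h0]
  apply IsUnit.map
  rw [isUnit_iff_ne_zero]
  intro hc
  rw [hc, map_zero] at h0
  exact hg.ne_zero h0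

lemma irreducible_pair {f g h : P2} (hf : f ≠ 0) (hqc : QuasiConvenient f)
    (hnd : NondegAtInf f)
    (h2 : ∀ w : ℝ × ℝ, w ≠ 0 → w.1 * w.2 ≤ 0 →
      ¬ ∃ x y : ℂ, x ≠ 0 ∧ y ≠ 0 ∧
        eval ![x, y] (initForm w f) = 0 ∧ eval ![x, y] (initForm (-w) f) = 0)
    (hg : Irreducible g) (hh : Irreducible h) (hgf : g ∣ f) (hhf : h ∣ f) :
    ∃ x y : ℂ, eval ![x, y] g = 0 ∧ eval ![x, y] h = 0 := by
  have hqg := qc_of_dvd hgf hqc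
  have hqh := qc_of_dvd hhf hqc
  have hdg := totalDegree_pos_of_irreducible hg
  have hdh := totalDegree_pos_of_irreducible hh
  by_cases hass : h ∣ g
  · obtain ⟨x, y, -, -, hxy⟩ := qc_totalDegree_torus hqh hdh
    obtain ⟨k, rfl⟩ := hass
    exact ⟨x, y, by rw [map_mul, hxy, zero_mul], hxy⟩
  have hgh : g * h ∣ f := by
    obtain ⟨k, rfl⟩ := hgf
    exact mul_dvd_mul_left g ((hh.prime.dvd_or_dvd hhf).resolve_left hass)
  have hpair := pairNondeg_of_dvd hf hgh hnd
  by_contra hcon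
  obtain ⟨A, B, hAB⟩ := plane_null hcon
  obtain ⟨c, hc, k, hk⟩ := const_mod hg hqg hqh hpair hAB
  obtain ⟨c', hc', l, hl⟩ := const_mod hh hqh hqg (pairNondeg_symm hpair)
    (A := B) (B := A) (by rw [add_comm]; exact hAB)
  have hk' : h = C c + g * k := by rw [← hk]; ring
  have hl' : g = C c' + h * l := by rw [← hl]; ring
  have hk0 : k ≠ 0 := by
    rintro rfl
    rw [hk', mul_zero, add_zero, totalDegree_C] at hdh
    exact lt_irrefl _ hdh
  have hl0 : l ≠ 0 := by
    rintro rfl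
    rw [hl', mul_zero, add_zero, totalDegree_C] at hdg
    exact lt_irrefl _ hdg
  have d1 : g.totalDegree + k.totalDegree ≤ h.totalDegree := by
    rw [← totalDegree_mul_of_isDomain hg.ne_zero hk0, ← hk]
    exact totalDegree_sub_C_le _ _
  have d2 : h.totalDegree + l.totalDegree ≤ g.totalDegree := by
    rw [← totalDegree_mul_of_isDomain hh.ne_zero hl0, ← hl]
    exact totalDegree_sub_C_le _ _
  have hkd : k.totalDegree = 0 := by omega
  rw [totalDegree_eq_zero_iff_eq_C] at hkd
  refine final_case hf hgf hqg hdg hpair (c := c) (c2 := coeff 0 k) ?_ ?_ h2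
  · intro h0
    rw [h0, map_zero] at hkd
    exact hk0 hkd
  · rw [← hkd, mul_comm]; exact hk'

lemma exists_irreducible_dvd {f g : P2} (hf : f ≠ 0) (hgf : g ∣ f) (hd : 0 < g.totalDegree) :
    ∃ p, Irreducible p ∧ p ∣ g := by
  apply WfDvdMonoid.exists_irreducible_factor
  · intro hu
    obtain ⟨r, -, rfl⟩ := MvPolynomial.isUnit_iff_eq_C_of_isReduced.1 hu
    rw [totalDegree_C] at hd
    exact lt_irrefl _ hd
  · rintro rfl
    exact hf (zero_dvd_iff.1 hgf)

/-- Main theorem: criterion of near irreducibility. -/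
theorem stmt11 (f : P2) (hd : 0 < f.totalDegree) (hqc : QuasiConvenient f)
    (hnd : NondegAtInf f)
    (h2 : ∀ w : ℝ × ℝ, w ≠ 0 → w.1 * w.2 ≤ 0 →
      ¬ ∃ x y : ℂ, x ≠ 0 ∧ y ≠ 0 ∧
        eval ![x, y] (initForm w f) = 0 ∧ eval ![x, y] (initForm (-w) f) = 0) :
    NearlyIrreducible f := by
  have hf : f ≠ 0 := qc_ne_zero hqc
  refine ⟨hd, ?_⟩
  intro G H hG hH hdG hdH
  obtain ⟨g, hg, hgG⟩ := exists_irreducible_dvd hf hG hdG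
  obtain ⟨h, hh, hhH⟩ := exists_irreducible_dvd hf hH hdH
  obtain ⟨x, y, h1, h3⟩ :=
    irreducible_pair hf hqc hnd h2 hg hh (hgG.trans hG) (hhH.trans hH)
  obtain ⟨a, rfl⟩ := hgG
  obtain ⟨b, rfl⟩ := hhH
  exact ⟨x, y, by rw [map_mul, h1, zero_mul], by rw [map_mul, h3, zero_mul]⟩
end
end
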